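/- arXiv:1803.02297 — 8 statements merged into one kernel-verified Lean document; each statement's English description precedes it below -/
import Mathlib

section
/- If f : [0,L] → ℝ is continuous, then the function u(x) = ∫₀^L g(x,z)·f(z) dz is twice continuously differentiable on [0,L] and satisfies c·u(x) − u''(x) = f(x) for all x ∈ [0,L], together with the boundary conditions u(0) = 0 and u'(L) = 0. In other words, the integral operator P_ς with kernel g inverts the operator c·I − D_x² subject to these boundary conditions. -/
/-!
Splitting the kernel at `z = x` gives, with `s = √c` and for `x ∈ [0,L]`,
`u(x) = (cosh (s (x - L)) A(x) + sinh (s x) B(x)) / (s cosh (s L))`, where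
`A(x) = ∫₀ˣ sinh (s z) f(z) dz` and `B(x) = ∫ₓᴸ cosh (s (z - L)) f(z) dz`.
By the fundamental theorem of calculus `A' = sinh (s x) f` and `B' = -cosh (s (x - L)) f`.
In `u'` the terms containing `A'` and `B'` cancel, so
`u' = (sinh (s (x - L)) A + cosh (s x) B) / cosh (s L)`. In `u''` they leave the Wronskian term
`(sinh (s (x - L)) sinh (s x) - cosh (s x) cosh (s (x - L))) f / cosh (s L) = -f`, by the addition
formula for `cosh`, so `u'' = s² u - f`. The boundary conditions hold because `A(0) = 0` and
`B(L) = 0`. To differentiate on all of `ℝ`, `f` is first replaced by the continuous extension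
that is constant outside `[0,L]`; this does not change `u`.
-/


/-- The Green's kernel of the operator `c·I − D_x²` with boundary conditions
`u(0) = 0`, `u'(L) = 0`. -/
noncomputable def gker (L c x z : ℝ) : ℝ :=
  if x ≤ z then
    Real.cosh (Real.sqrt c * (z - L)) * Real.sinh (Real.sqrt c * x) /
      (Real.sqrt c * Real.cosh (Real.sqrt c * L))
  else
    Real.cosh (Real.sqrt c * (x - L)) * Real.sinh (Real.sqrt c * z) /
      (Real.sqrt c * Real.cosh (Real.sqrt c * L))

/-- The kernel integral split at the diagonal `z = x`. -/
lemma integral_gker_mul (L c : ℝ) (F : ℝ → ℝ) (hF : Continuous F) {x : ℝ}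
    (hx : x ∈ Set.Icc 0 L) :
    ∫ z in (0:ℝ)..L, gker L c x z * F z =
      (Real.cosh (√c * (x - L)) * (∫ z in (0:ℝ)..x, Real.sinh (√c * z) * F z) +
        Real.sinh (√c * x) * (∫ z in x..L, Real.cosh (√c * (z - L)) * F z)) /
        (√c * Real.cosh (√c * L)) := by
  have h1 : Set.EqOn (fun z => gker L c x z * F z)
      (fun z => Real.cosh (√c * (x - L)) / (√c * Real.cosh (√c * L)) *
        (Real.sinh (√c * z) * F z)) (Set.uIcc 0 x) := by
    intro z hz
    rw [Set.uIcc_of_le hx.1] at hz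
    simp only [gker]
    split_ifs with h
    · obtain rfl : x = z := le_antisymm h hz.2
      ring
    · ring
  have h2 : Set.EqOn (fun z => gker L c x z * F z)
      (fun z => Real.sinh (√c * x) / (√c * Real.cosh (√c * L)) *
        (Real.cosh (√c * (z - L)) * F z)) (Set.uIcc x L) := by
    intro z hz
    rw [Set.uIcc_of_le hx.2] at hz
    simp only [gker, if_pos hz.1]
    ring
  have i1 : IntervalIntegrable (fun z => gker L c x z * F z) MeasureTheory.volume 0 x := by
    refine ContinuousOn.intervalIntegrable (ContinuousOn.congr ?_ h1)
    fun_prop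
  have i2 : IntervalIntegrable (fun z => gker L c x z * F z) MeasureTheory.volume x L := by
    refine ContinuousOn.intervalIntegrable (ContinuousOn.congr ?_ h2)
    fun_prop
  rw [← intervalIntegral.integral_add_adjacent_intervals i1 i2,
    intervalIntegral.integral_congr h1, intervalIntegral.integral_congr h2,
    intervalIntegral.integral_const_mul, intervalIntegral.integral_const_mul]
  ring

/-- The integral operator `P_ς` with kernel `g` inverts `c·I − D_x²` subject to the
boundary conditions `u(0) = 0`, `u'(L) = 0`: if `f` is continuous on `[0,L]`, then
`u(x) = ∫₀^L g(x,z) f(z) dz` is twice continuously differentiable on `[0,L]`,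
satisfies `c·u − u'' = f` on `[0,L]`, and `u(0) = 0`, `u'(L) = 0`. -/
theorem green_inverts (L c : ℝ) (hL : 0 < L) (hc : 0 < c)
    (f : ℝ → ℝ) (hf : ContinuousOn f (Set.Icc 0 L))
    (u : ℝ → ℝ) (hu : ∀ x, u x = ∫ z in (0:ℝ)..L, gker L c x z * f z) :
    ∃ u' u'' : ℝ → ℝ,
      (∀ x ∈ Set.Icc 0 L, HasDerivWithinAt u (u' x) (Set.Icc 0 L) x) ∧
      (∀ x ∈ Set.Icc 0 L, HasDerivWithinAt u' (u'' x) (Set.Icc 0 L) x) ∧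
      ContinuousOn u'' (Set.Icc 0 L) ∧
      (∀ x ∈ Set.Icc 0 L, c * u x - u'' x = f x) ∧
      u 0 = 0 ∧ u' L = 0 := by
  set F : ℝ → ℝ := Set.IccExtend hL.le ((Set.Icc 0 L).domRestrict f) with hFdef
  have hF : Continuous F := hf.domRestrict.Icc_extend'
  have hFf : ∀ x ∈ Set.Icc 0 L, F x = f x := fun x hx => by
    rw [hFdef, Set.IccExtend_of_mem _ _ hx, Set.domRestrict_apply]
  have hs : 0 < √c := Real.sqrt_pos.2 hc
  have hss : √c * √c = c := Real.mul_self_sqrt hc.le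
  have hch : 0 < Real.cosh (√c * L) := Real.cosh_pos _
  set A : ℝ → ℝ := fun x => ∫ z in (0:ℝ)..x, Real.sinh (√c * z) * F z with hA
  set B : ℝ → ℝ := fun x => ∫ z in x..L, Real.cosh (√c * (z - L)) * F z with hB
  have hu' : ∀ x ∈ Set.Icc 0 L, u x =
      (Real.cosh (√c * (x - L)) * A x + Real.sinh (√c * x) * B x) /
        (√c * Real.cosh (√c * L)) := by
    intro x hx
    rw [hu, ← integral_gker_mul L c F hF hx]
    refine intervalIntegral.integral_congr fun z hz => ?_
    rw [Set.uIcc_of_le hL.le] at hz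
    simp only [hFf z hz]
  have hAd : ∀ x, HasDerivAt A (Real.sinh (√c * x) * F x) x := fun x => by
    have hcont : Continuous fun z => Real.sinh (√c * z) * F z := by fun_prop
    exact hcont.integral_hasStrictDerivAt 0 x |>.hasDerivAt
  have hBd : ∀ x, HasDerivAt B (-(Real.cosh (√c * (x - L)) * F x)) x := fun x => by
    have hcont : Continuous fun z => Real.cosh (√c * (z - L)) * F z := by fun_prop
    exact intervalIntegral.integral_hasDerivAt_left (hcont.intervalIntegrable _ _)
      (hcont.stronglyMeasurableAtFilter _ _) hcont.continuousAt
  have hl : ∀ x, HasDerivAt (fun x => √c * (x - L)) (√c) x := fun x => by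
    simpa using ((hasDerivAt_id x).sub_const L).const_mul (√c)
  have hm : ∀ x, HasDerivAt (fun x => √c * x) (√c) x := fun x => by
    simpa using (hasDerivAt_id x).const_mul (√c)
  have hd1 : ∀ x ∈ Set.Icc 0 L, HasDerivWithinAt u
      ((Real.sinh (√c * (x - L)) * A x + Real.cosh (√c * x) * B x) / Real.cosh (√c * L))
      (Set.Icc 0 L) x := by
    intro x hx
    have h := ((((hl x).cosh.mul (hAd x)).add ((hm x).sinh.mul (hBd x))).div_const
      (√c * Real.cosh (√c * L))).hasDerivWithinAt (s := Set.Icc 0 L)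
    refine (h.congr hu' (hu' x hx)).congr_deriv ?_
    field_simp
    ring
  refine ⟨fun x => (Real.sinh (√c * (x - L)) * A x + Real.cosh (√c * x) * B x) /
    Real.cosh (√c * L), fun x => c * u x - f x, hd1, ?_, ?_, ?_, ?_, ?_⟩
  · intro x hx
    have h := ((((hl x).sinh.mul (hAd x)).add ((hm x).cosh.mul (hBd x))).div_const
      (Real.cosh (√c * L))).hasDerivWithinAt (s := Set.Icc 0 L)
    refine h.congr_deriv ?_
    have key : Real.cosh (√c * L) = Real.cosh (√c * x) * Real.cosh (√c * (x - L)) -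
        Real.sinh (√c * x) * Real.sinh (√c * (x - L)) := by
      rw [← Real.cosh_sub]
      congr 1
      ring
    -- `c = √c²` cancels the factor `√c` in the denominator of `u`.
    have hcu : c * u x = √c * (Real.cosh (√c * (x - L)) * A x + Real.sinh (√c * x) * B x) /
        Real.cosh (√c * L) := by
      rw [hu' x hx]
      nth_rewrite 1 [← hss]
      field_simp
    beta_reduce
    rw [hcu, ← hFf x hx, eq_sub_iff_add_eq, div_add' _ _ _ hch.ne']
    congr 1
    linear_combination F x * key
  · exact (continuousOn_const.mul fun x hx => (hd1 x hx).continuousWithinAt).sub hf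
  · intro x _
    ring
  · rw [hu' 0 ⟨le_rfl, hL.le⟩]
    simp [hA]
  · simp [hB]
end

section
/- The operator J_ς := c·P_ς − I is nonpositive on L²(0,L): if u : [0,L] → ℝ is twice continuously differentiable with u(0) = 0 and u'(L) = 0, and f := c·u − u'', then ∫₀^L (c·u(x) − f(x))·f(x) dx = −c·∫₀^L (u'(x))² dx − ∫₀^L (u''(x))² dx, and in particular ∫₀^L (c·u(x) − f(x))·f(x) dx ≤ 0. -/
/-!
Since `c·u − f = u''`, the integrand is `c·(u·u'') − (u'')²`. Integrating `u·u''` by parts, the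
boundary term `u·u'` vanishes at `0` because `u(0) = 0` and at `L` because `u'(L) = 0`, so
`∫ u·u'' = −∫ (u')²`. The resulting right-hand side is a sum of two nonpositive terms.
-/

/-- The operator `J_ς := c·P_ς − I` is nonpositive on `L²(0,L)`: if `u` is twice
continuously differentiable on `[0,L]` with `u(0) = 0` and `u'(L) = 0`, and
`f := c·u − u''`, then `∫₀^L (c·u − f)·f dx = −c·∫₀^L (u')² dx − ∫₀^L (u'')² dx ≤ 0`. -/
theorem J_nonpos (L c : ℝ) (hL : 0 < L) (hc : 0 < c)
    (u u' u'' : ℝ → ℝ)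
    (hu' : ∀ x ∈ Set.Icc 0 L, HasDerivWithinAt u (u' x) (Set.Icc 0 L) x)
    (hu'' : ∀ x ∈ Set.Icc 0 L, HasDerivWithinAt u' (u'' x) (Set.Icc 0 L) x)
    (hu''c : ContinuousOn u'' (Set.Icc 0 L))
    (hbc0 : u 0 = 0) (hbcL : u' L = 0)
    (f : ℝ → ℝ) (hf : ∀ x, f x = c * u x - u'' x) :
    (∫ x in (0:ℝ)..L, (c * u x - f x) * f x) =
        -c * (∫ x in (0:ℝ)..L, (u' x) ^ 2) - ∫ x in (0:ℝ)..L, (u'' x) ^ 2 ∧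
      (∫ x in (0:ℝ)..L, (c * u x - f x) * f x) ≤ 0 := by
  have hI : Set.uIcc 0 L = Set.Icc 0 L := Set.uIcc_of_le hL.le
  have huc : ContinuousOn u (Set.uIcc 0 L) := hI ▸ fun x hx => (hu' x hx).continuousWithinAt
  have hu'c : ContinuousOn u' (Set.uIcc 0 L) := hI ▸ fun x hx => (hu'' x hx).continuousWithinAt
  rw [← hI] at hu' hu'' hu''c
  have hparts : ∫ x in (0:ℝ)..L, u x * u'' x = -∫ x in (0:ℝ)..L, (u' x) ^ 2 := by
    rw [intervalIntegral.integral_mul_deriv_eq_deriv_mul_of_hasDerivWithinAt hu' hu''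
      hu'c.intervalIntegrable hu''c.intervalIntegrable]
    simp [hbc0, hbcL, pow_two]
  have hmain : (∫ x in (0:ℝ)..L, (c * u x - f x) * f x) =
      -c * (∫ x in (0:ℝ)..L, (u' x) ^ 2) - ∫ x in (0:ℝ)..L, (u'' x) ^ 2 := by
    have hfun : ∀ x, (c * u x - f x) * f x = c * (u x * u'' x) - (u'' x) ^ 2 := by
      intro x
      rw [hf]
      ring
    simp_rw [hfun]
    have hint1 : IntervalIntegrable (fun x => c * (u x * u'' x)) MeasureTheory.volume 0 L :=
      (huc.mul hu''c).intervalIntegrable.const_mul c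
    have hint2 : IntervalIntegrable (fun x => (u'' x) ^ 2) MeasureTheory.volume 0 L :=
      (hu''c.pow 2).intervalIntegrable
    rw [intervalIntegral.integral_sub hint1 hint2,
      intervalIntegral.integral_const_mul, hparts]
    ring
  refine ⟨hmain, ?_⟩
  have h1 : 0 ≤ ∫ x in (0:ℝ)..L, (u' x) ^ 2 :=
    intervalIntegral.integral_nonneg hL.le fun x _ => sq_nonneg _
  have h2 : 0 ≤ ∫ x in (0:ℝ)..L, (u'' x) ^ 2 :=
    intervalIntegral.integral_nonneg hL.le fun x _ => sq_nonneg _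
  rw [hmain]
  linarith [mul_nonneg hc.le h1]
end

section
/- The feedback operator a·P_ς + b·I is nonnegative on L²(0,L): for all real numbers a ≥ 0 and b ≥ 0 and every continuous function f : [0,L] → ℝ, ∫₀^L (a·(P_ς f)(x) + b·f(x))·f(x) dx ≥ 0. -/
open Real in
/-- The solution `u` of `k² u - u'' = F`, `u 0 = 0`, `u' L = 0` (for `k ≠ 0`) given by
variation of parameters.
The second integral runs from `L` to `x`, hence the minus sign. -/
noncomputable def greenSol (L k : ℝ) (F : ℝ → ℝ) (x : ℝ) : ℝ :=
  (cosh (k * (x - L)) * (∫ z in (0:ℝ)..x, sinh (k * z) * F z)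
    - sinh (k * x) * (∫ z in L..x, cosh (k * (z - L)) * F z)) / (k * cosh (k * L))

open Real in
/-- The derivative of `greenSol`, in closed form. -/
noncomputable def greenDeriv (L k : ℝ) (F : ℝ → ℝ) (x : ℝ) : ℝ :=
  (sinh (k * (x - L)) * (∫ z in (0:ℝ)..x, sinh (k * z) * F z)
    - cosh (k * x) * (∫ z in L..x, cosh (k * (z - L)) * F z)) / cosh (k * L)

lemma hasDerivAt_greenSol {L k : ℝ} (hk : k ≠ 0) {F : ℝ → ℝ} (hF : Continuous F) (x : ℝ) :
    HasDerivAt (greenSol L k F) (greenDeriv L k F x) x := by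
  have hA : HasDerivAt (fun x => ∫ z in (0:ℝ)..x, Real.sinh (k * z) * F z) _ x :=
    (Continuous.integral_hasStrictDerivAt (by fun_prop) 0 x).hasDerivAt
  have hB : HasDerivAt (fun x => ∫ z in L..x, Real.cosh (k * (z - L)) * F z) _ x :=
    (Continuous.integral_hasStrictDerivAt (by fun_prop) L x).hasDerivAt
  have h1 : HasDerivAt (fun x => k * (x - L)) k x := by
    simpa using ((hasDerivAt_id x).sub_const L).const_mul k
  have h2 : HasDerivAt (fun x => k * x) k x := by
    simpa using (hasDerivAt_id x).const_mul k
  have h := ((h1.cosh.mul hA).sub (h2.sinh.mul hB)).div_const (k * Real.cosh (k * L))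
  refine h.congr_deriv ?_
  have := (Real.cosh_pos (k * L)).ne'
  rw [greenDeriv]
  field_simp
  ring

lemma hasDerivAt_greenDeriv {L k : ℝ} {F : ℝ → ℝ} (hF : Continuous F) (x : ℝ) :
    HasDerivAt (greenDeriv L k F) (k ^ 2 * greenSol L k F x - F x) x := by
  have hA : HasDerivAt (fun x => ∫ z in (0:ℝ)..x, Real.sinh (k * z) * F z) _ x :=
    (Continuous.integral_hasStrictDerivAt (by fun_prop) 0 x).hasDerivAt
  have hB : HasDerivAt (fun x => ∫ z in L..x, Real.cosh (k * (z - L)) * F z) _ x :=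
    (Continuous.integral_hasStrictDerivAt (by fun_prop) L x).hasDerivAt
  have h1 : HasDerivAt (fun x => k * (x - L)) k x := by
    simpa using ((hasDerivAt_id x).sub_const L).const_mul k
  have h2 : HasDerivAt (fun x => k * x) k x := by
    simpa using (hasDerivAt_id x).const_mul k
  have h := ((h1.sinh.mul hA).sub (h2.cosh.mul hB)).div_const (Real.cosh (k * L))
  refine h.congr_deriv ?_
  have hne := (Real.cosh_pos (k * L)).ne'
  have hadd : Real.cosh (k * L) = Real.cosh (k * x) * Real.cosh (k * (x - L))
      - Real.sinh (k * x) * Real.sinh (k * (x - L)) := by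
    rw [← Real.cosh_sub]; congr 1; ring
  rw [greenSol]
  field_simp
  linear_combination F x * hadd

/-- Splitting at `z = x`: integration against the Green's kernel is variation of parameters. -/
lemma gker_integral_eq {L c : ℝ} {F : ℝ → ℝ} (hF : Continuous F)
    {x : ℝ} (hx : x ∈ Set.Icc 0 L) :
    ∫ z in (0:ℝ)..L, gker L c x z * F z = greenSol L (√c) F x := by
  set C := √c * Real.cosh (√c * L) with hC
  have e1 : Set.EqOn (fun z => Real.cosh (√c * (x - L)) / C * (Real.sinh (√c * z) * F z))
      (fun z => gker L c x z * F z) (Set.uIcc 0 x) := by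
    intro z hz
    rw [Set.uIcc_of_le hx.1] at hz
    rcases hz.2.lt_or_eq with h | h
    · simp only [gker, if_neg (not_le.2 h)]
      ring
    · subst h
      simp only [gker, le_refl, if_true]
      ring
  have e2 : Set.EqOn (fun z => Real.sinh (√c * x) / C * (Real.cosh (√c * (z - L)) * F z))
      (fun z => gker L c x z * F z) (Set.uIcc x L) := by
    intro z hz
    rw [Set.uIcc_of_le hx.2] at hz
    simp only [gker, if_pos hz.1]
    ring
  have i1 : IntervalIntegrable (fun z => gker L c x z * F z) MeasureTheory.volume 0 x :=
    ((by fun_prop : Continuous fun z =>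
      Real.cosh (√c * (x - L)) / C * (Real.sinh (√c * z) * F z)).continuousOn.congr
      e1.symm).intervalIntegrable
  have i2 : IntervalIntegrable (fun z => gker L c x z * F z) MeasureTheory.volume x L :=
    ((by fun_prop : Continuous fun z =>
      Real.sinh (√c * x) / C * (Real.cosh (√c * (z - L)) * F z)).continuousOn.congr
      e2.symm).intervalIntegrable
  rw [← intervalIntegral.integral_add_adjacent_intervals i1 i2,
    ← intervalIntegral.integral_congr e1, ← intervalIntegral.integral_congr e2,
    intervalIntegral.integral_const_mul, intervalIntegral.integral_const_mul,
    intervalIntegral.integral_symm L x, greenSol, ← hC]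
  ring

/-- The feedback operator `a·P_ς + b·I` is nonnegative on `L²(0,L)`: for `a, b ≥ 0` and
every continuous `f`, `∫₀^L (a·(P_ς f)(x) + b·f(x))·f(x) dx ≥ 0`. -/
theorem feedback_nonneg (L c : ℝ) (hL : 0 < L) (hc : 0 < c)
    (a b : ℝ) (ha : 0 ≤ a) (hb : 0 ≤ b)
    (f : ℝ → ℝ) (hf : ContinuousOn f (Set.Icc 0 L)) :
    0 ≤ ∫ x in (0:ℝ)..L, (a * (∫ z in (0:ℝ)..L, gker L c x z * f z) + b * f x) * f x := by
  -- Only the values of `f` on `[0, L]` matter; extend them to a continuous function on `ℝ`.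
  obtain ⟨F, hF, hFf⟩ : ∃ F : ℝ → ℝ, Continuous F ∧ ∀ x ∈ Set.Icc 0 L, f x = F x :=
    ⟨Set.IccExtend hL.le ((Set.Icc 0 L).domRestrict f),
      hf.domRestrict.Icc_extend', fun x hx => by simp [Set.IccExtend_of_mem hL.le _ hx]⟩
  have hk : √c ≠ 0 := (Real.sqrt_pos.2 hc).ne'
  have hu := hasDerivAt_greenSol (L := L) hk hF
  have hv := hasDerivAt_greenDeriv (L := L) (k := √c) hF
  set u := greenSol L (√c) F with hu_def
  set v := greenDeriv L (√c) F with hv_def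
  have hcu : Continuous u := continuous_iff_continuousAt.2 fun x => (hu x).continuousAt
  have hcv : Continuous v := continuous_iff_continuousAt.2 fun x => (hv x).continuousAt
  have hu0 : u 0 = 0 := by simp [hu_def, greenSol]
  have hvL : v L = 0 := by simp [hv_def, greenDeriv]
  have hcongr : ∫ x in (0:ℝ)..L, (a * (∫ z in (0:ℝ)..L, gker L c x z * f z) + b * f x) * f x
      = ∫ x in (0:ℝ)..L, (a * u x + b * F x) * F x := by
    refine intervalIntegral.integral_congr fun x hx => ?_
    rw [Set.uIcc_of_le hL.le] at hx
    have hfz : ∫ z in (0:ℝ)..L, gker L c x z * f z = ∫ z in (0:ℝ)..L, gker L c x z * F z := by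
      refine intervalIntegral.integral_congr fun z hz => ?_
      rw [Set.uIcc_of_le hL.le] at hz
      simp only [hFf z hz]
    simp only [hfz, gker_integral_eq hF hx, hFf x hx, hu_def]
  have hparts : ∫ x in (0:ℝ)..L, (v x * v x + u x * (√c ^ 2 * u x - F x)) = 0 := by
    rw [intervalIntegral.integral_eq_sub_of_hasDerivAt (fun x _ => (hu x).mul (hv x))
      ((by fun_prop : Continuous fun x =>
        v x * v x + u x * (√c ^ 2 * u x - F x)).intervalIntegrable 0 L)]
    simp [hu0, hvL]
  have hsplit : ∫ x in (0:ℝ)..L, (a * u x + b * F x) * F x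
      = (∫ x in (0:ℝ)..L, (a * (v x ^ 2 + √c ^ 2 * u x ^ 2) + b * F x ^ 2))
        - a * ∫ x in (0:ℝ)..L, (v x * v x + u x * (√c ^ 2 * u x - F x)) := by
    rw [← intervalIntegral.integral_const_mul, ← intervalIntegral.integral_sub
      (Continuous.intervalIntegrable (by fun_prop) _ _)
      (Continuous.intervalIntegrable (by fun_prop) _ _)]
    congr 1
    ext x
    ring
  rw [hcongr, hsplit, hparts, mul_zero, sub_zero]
  exact intervalIntegral.integral_nonneg hL.le fun x _ => by positivity
end

section
/- Zero is not an eigenvalue of the closed-loop generator: let w : [0,L] → ℝ be four times continuously differentiable and u : [0,L] → ℝ be twice continuously differentiable, satisfying the coupled system Ã·w''''(x) − k·B̃·u'(x) = 0 and c·u(x) − u''(x) + B̃·w'''(x) = 0 for all x ∈ [0,L], with boundary conditions w(0) = 0, w'(0) = 0, u(0) = 0, w''(L) = 0, u'(L) = 0, and Ã·w'''(L) − k·B̃·u(L) = 0. Then w ≡ 0 and u ≡ 0 on [0,L]. -/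
/-!
The first equation and the condition `A w''' - k B u = 0` at `L` say that `A w''' - k B u` vanishes
identically. Substituting `w''' = (k B / A) u` in the second equation gives `u'' = K u`
with `K = c + k B² / A > 0`. The product `u u'` vanishes at both ends of `[0, L]` and has
derivative `u'² + K u² ≥ 0`, so it is monotone, hence identically zero, and so is its derivative;
this forces `u = 0`. Then `w''' = 0`, and the boundary conditions on `w''`, `w'` and `w` give
`w = 0` after integrating three times.
-/

theorem eq_of_hasDerivWithinAt_zero {L : ℝ} {f f' : ℝ → ℝ}
    (hf : ∀ x ∈ Set.Icc 0 L, HasDerivWithinAt f (f' x) (Set.Icc 0 L) x)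
    (h0 : ∀ x ∈ Set.Icc 0 L, f' x = 0) {a x : ℝ}
    (ha : a ∈ Set.Icc 0 L) (hx : x ∈ Set.Icc 0 L) : f x = f a := by
  have h := (convex_Icc 0 L).norm_image_sub_le_of_norm_hasDerivWithin_le (C := 0) hf
    (fun y hy => by simp [h0 y hy]) ha hx
  rw [zero_mul, norm_le_zero_iff] at h
  linarith

/-- Solutions of `u'' = K u`, `K > 0`, with `u(0) = u'(L) = 0` vanish: `u u'` is monotone and
zero at both endpoints. -/
theorem eq_zero_of_second_deriv_eq_mul {L K : ℝ} (hL : 0 < L) (hK : 0 < K) {u u' u'' : ℝ → ℝ}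
    (hu' : ∀ x ∈ Set.Icc 0 L, HasDerivWithinAt u (u' x) (Set.Icc 0 L) x)
    (hu'' : ∀ x ∈ Set.Icc 0 L, HasDerivWithinAt u' (u'' x) (Set.Icc 0 L) x)
    (hK' : ∀ x ∈ Set.Icc 0 L, u'' x = K * u x) (h0 : u 0 = 0) (h1 : u' L = 0) :
    ∀ x ∈ Set.Icc 0 L, u x = 0 := by
  have hg : ∀ x ∈ Set.Icc 0 L,
      HasDerivWithinAt (fun y => u y * u' y) (u' x ^ 2 + K * u x ^ 2) (Set.Icc 0 L) x := by
    intro x hx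
    refine ((hu' x hx).mul (hu'' x hx)).congr_deriv ?_
    rw [hK' x hx]
    ring
  have hmono : MonotoneOn (fun y => u y * u' y) (Set.Icc 0 L) :=
    monotoneOn_of_hasDerivWithinAt_nonneg (convex_Icc 0 L)
      (fun x hx => (hg x hx).continuousWithinAt)
      (fun x hx => (hg x (interior_subset hx)).mono interior_subset)
      (fun x _ => by positivity)
  have hzero : ∀ x ∈ Set.Icc 0 L, u x * u' x = 0 := by
    intro x hx
    have ha := hmono (Set.left_mem_Icc.2 hL.le) hx hx.1
    have hb := hmono hx (Set.right_mem_Icc.2 hL.le) hx.2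
    simp only [h0, h1, zero_mul, mul_zero] at ha hb
    exact le_antisymm hb ha
  intro x hx
  have hconst : HasDerivWithinAt (fun y => u y * u' y) 0 (Set.Icc 0 L) x :=
    (hasDerivWithinAt_const x _ (0 : ℝ)).congr hzero (hzero x hx)
  have hsum := (uniqueDiffOn_Icc hL x hx).eq_deriv _ (hg x hx) hconst
  have hsq : K * u x ^ 2 = 0 := by
    have : 0 ≤ K * u x ^ 2 := by positivity
    nlinarith [sq_nonneg (u' x)]
  simpa [hK.ne'] using hsq

/-- Zero is not an eigenvalue of the closed-loop generator: if `w` is `C⁴` and `u` is `C²`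
on `[0,L]` with `Ã·w'''' − k·B̃·u' = 0` and `c·u − u'' + B̃·w''' = 0` on `[0,L]`, and
`w(0) = w'(0) = u(0) = w''(L) = u'(L) = 0` and `Ã·w'''(L) − k·B̃·u(L) = 0`, then
`w ≡ 0` and `u ≡ 0` on `[0,L]`. -/
theorem zero_not_eigenvalue (L A B k c : ℝ)
    (hL : 0 < L) (hA : 0 < A) (hB : 0 < B) (hk : 0 < k) (hc : 0 < c)
    (w w' w'' w''' w'''' : ℝ → ℝ)
    (hw' : ∀ x ∈ Set.Icc 0 L, HasDerivWithinAt w (w' x) (Set.Icc 0 L) x)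
    (hw'' : ∀ x ∈ Set.Icc 0 L, HasDerivWithinAt w' (w'' x) (Set.Icc 0 L) x)
    (hw''' : ∀ x ∈ Set.Icc 0 L, HasDerivWithinAt w'' (w''' x) (Set.Icc 0 L) x)
    (hw'''' : ∀ x ∈ Set.Icc 0 L, HasDerivWithinAt w''' (w'''' x) (Set.Icc 0 L) x)
    (hw''''c : ContinuousOn w'''' (Set.Icc 0 L))
    (u u' u'' : ℝ → ℝ)
    (hu' : ∀ x ∈ Set.Icc 0 L, HasDerivWithinAt u (u' x) (Set.Icc 0 L) x)
    (hu'' : ∀ x ∈ Set.Icc 0 L, HasDerivWithinAt u' (u'' x) (Set.Icc 0 L) x)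
    (hu''c : ContinuousOn u'' (Set.Icc 0 L))
    (heq1 : ∀ x ∈ Set.Icc 0 L, A * w'''' x - k * B * u' x = 0)
    (heq2 : ∀ x ∈ Set.Icc 0 L, c * u x - u'' x + B * w''' x = 0)
    (hbc1 : w 0 = 0) (hbc2 : w' 0 = 0) (hbc3 : u 0 = 0)
    (hbc4 : w'' L = 0) (hbc5 : u' L = 0)
    (hbc6 : A * w''' L - k * B * u L = 0) :
    ∀ x ∈ Set.Icc 0 L, w x = 0 ∧ u x = 0 := by
  have h0 : (0 : ℝ) ∈ Set.Icc 0 L := Set.left_mem_Icc.2 hL.le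
  have hLm : L ∈ Set.Icc 0 L := Set.right_mem_Icc.2 hL.le
  have hint : ∀ x ∈ Set.Icc 0 L, A * w''' x - k * B * u x = 0 := fun x hx =>
    (eq_of_hasDerivWithinAt_zero (f := fun y => A * w''' y - k * B * u y)
      (fun y hy => ((hw'''' y hy).const_mul A).sub ((hu' y hy).const_mul (k * B)))
      heq1 hLm hx).trans hbc6
  have hu : ∀ x ∈ Set.Icc 0 L, u x = 0 := by
    refine eq_zero_of_second_deriv_eq_mul (K := c + k * B ^ 2 / A) hL (by positivity)
      hu' hu'' (fun x hx => ?_) hbc3 hbc5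
    have hw : w''' x = k * B * u x / A := by
      rw [eq_div_iff hA.ne']
      linarith [hint x hx]
    have h2 := heq2 x hx
    rw [hw] at h2
    linear_combination -h2
  have hw3 : ∀ x ∈ Set.Icc 0 L, w''' x = 0 := fun x hx => by
    simpa [hu x hx, hA.ne'] using hint x hx
  have hw2 : ∀ x ∈ Set.Icc 0 L, w'' x = 0 := fun x hx =>
    (eq_of_hasDerivWithinAt_zero hw''' hw3 hLm hx).trans hbc4
  have hw1 : ∀ x ∈ Set.Icc 0 L, w' x = 0 := fun x hx =>
    (eq_of_hasDerivWithinAt_zero hw'' hw2 h0 hx).trans hbc2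
  exact fun x hx => ⟨(eq_of_hasDerivWithinAt_zero hw' hw1 h0 hx).trans hbc1, hu x hx⟩
end

section
/- The overdetermined eigenvalue problem on the imaginary axis has only the trivial solution: let ω ∈ ℝ, let w : [0,L] → ℝ be four times continuously differentiable and z : [0,L] → ℝ be twice continuously differentiable, satisfying c·z(x) − z''(x) = w'(x) and Ã·w''''(x) + K·(c·z'(x) − w''(x)) = m·ω²·w(x) for all x ∈ [0,L], with boundary conditions w(0) = 0, w'(0) = 0, w'(L) = 0, w''(L) = 0, w'''(L) = 0, z(0) = 0, z(L) = 0, and z'(L) = 0. Then w ≡ 0 on [0,L]. -/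
/-!
Reversing the interval, put `t = L - x`. With `u = w`, `v = -w'`, `a = w''`, `b = -w'''`, `p = z`,
`q = -z'`, all evaluated at `L - t`, the two equations become the first-order linear system

`u' = v`, `v' = a`, `a' = b`, `A b' = m ω² u + K a + K c q`, `p' = q`, `q' = c p + v`,

all of whose coefficients are nonnegative. The boundary conditions at `x = L` say that the initial
state is `(w L, 0, 0, 0, 0, 0)`; replacing `(w, z)` by `(-w, -z)` if necessary, it is nonnegative.
A linear system with nonnegative coefficients preserves the nonnegative orthant
(`nonneg_of_nonneg_system`), so `u ≥ 0` and `v ≥ 0`; that is, `w ≥ 0` and `w` is nonincreasing in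
`x`. Since `w 0 = 0`, also `w ≤ 0`, and therefore `w = 0`.
-/

/-- The square of the negative part is differentiable, also at the origin. -/
lemma hasDerivAt_min_zero_sq (s : ℝ) :
    HasDerivAt (fun r : ℝ => (min r 0) ^ 2) (2 * min s 0) s := by
  rcases lt_trichotomy s 0 with hs | rfl | hs
  · have h : HasDerivAt (fun r : ℝ => r ^ 2) (2 * min s 0) s := by
      simpa [min_eq_left hs.le] using hasDerivAt_pow 2 s
    refine h.congr_of_eventuallyEq ?_
    filter_upwards [eventually_lt_nhds hs] with r hr
    rw [min_eq_left hr.le]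
  · rw [hasDerivAt_iff_isLittleO]
    have h : (fun r : ℝ => (min r 0) ^ 2) =O[nhds 0] fun r : ℝ => r ^ 2 := by
      refine Asymptotics.IsBigO.of_bound 1 (Filter.Eventually.of_forall fun r => ?_)
      rcases le_total r 0 with hr | hr
      · simp [min_eq_left hr]
      · simp [min_eq_right hr, sq_nonneg]
    simpa using h.trans_isLittleO (Asymptotics.isLittleO_pow_id (𝕜 := ℝ) one_lt_two)
  · rw [min_eq_right hs.le, mul_zero]
    refine (hasDerivAt_const s (0 : ℝ)).congr_of_eventuallyEq ?_
    filter_upwards [eventually_gt_nhds hs] with r hr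
    simp [min_eq_right hr.le]

/-- A linear system `X' = M X` with entrywise nonnegative `M` preserves the nonnegative orthant.
The sum `N` of the squared negative parts of the coordinates satisfies `N' ≤ C N`, and it vanishes
at time `0`. -/
lemma nonneg_of_nonneg_system {ι : Type*} [Fintype ι] {L : ℝ} (hL : 0 ≤ L)
    (M : ι → ι → ℝ) (hM : ∀ i j, 0 ≤ M i j) (X : ℝ → ι → ℝ)
    (hX : ∀ i, ∀ t ∈ Set.Icc 0 L,
      HasDerivWithinAt (fun s => X s i) (∑ j, M i j * X t j) (Set.Icc 0 L) t)
    (h0 : ∀ i, 0 ≤ X 0 i) :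
    ∀ t ∈ Set.Icc 0 L, ∀ i, 0 ≤ X t i := by
  set n : ℝ → ι → ℝ := fun t i => min (X t i) 0 with hn
  set N : ℝ → ℝ := fun t => ∑ i, (n t i) ^ 2 with hN
  set B : ℝ := ∑ i, ∑ j, M i j with hB
  set N' : ℝ → ℝ := fun t => ∑ i, 2 * n t i * ∑ j, M i j * X t j with hN'
  have hder : ∀ t ∈ Set.Icc 0 L, HasDerivWithinAt N (N' t) (Set.Icc 0 L) t := by
    intro t ht
    refine HasDerivWithinAt.fun_sum fun i _ => ?_
    exact (hasDerivAt_min_zero_sq (X t i)).comp_hasDerivWithinAt t (hX i t ht)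
  have hle : ∀ t, N' t ≤ 2 * B * N t := by
    intro t
    have hsq : ∀ i, (n t i) ^ 2 ≤ N t := fun i =>
      Finset.single_le_sum (f := fun i => (n t i) ^ 2) (fun i _ => sq_nonneg _) (Finset.mem_univ i)
    have : 2 * B * N t = ∑ i, ∑ j, M i j * (2 * N t) := by
      simp only [hB, ← Finset.sum_mul]; ring
    rw [this]
    refine Finset.sum_le_sum fun i _ => ?_
    rw [Finset.mul_sum]
    refine Finset.sum_le_sum fun j _ => ?_
    have hni : n t i ≤ 0 := min_le_right _ _
    have hnj : n t j ≤ X t j := min_le_left _ _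
    have h1 : n t i * X t j ≤ n t i * n t j := mul_le_mul_of_nonpos_left hnj hni
    have h2 : 2 * (n t i * X t j) ≤ 2 * N t := by
      nlinarith [sq_nonneg (n t i - n t j), hsq i, hsq j]
    calc 2 * n t i * (M i j * X t j) = M i j * (2 * (n t i * X t j)) := by ring
      _ ≤ M i j * (2 * N t) := mul_le_mul_of_nonneg_left h2 (hM i j)
  have hderE : ∀ t ∈ Set.Icc 0 L, HasDerivWithinAt (fun s => Real.exp (-(2 * B) * s) * N s)
      (Real.exp (-(2 * B) * t) * (-(2 * B)) * N t + Real.exp (-(2 * B) * t) * N' t)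
      (Set.Icc 0 L) t := fun t ht => by
    have he : HasDerivAt (fun s => Real.exp (-(2 * B) * s))
        (Real.exp (-(2 * B) * t) * (-(2 * B))) t := by
      simpa using ((hasDerivAt_id t).const_mul (-(2 * B))).exp
    exact he.hasDerivWithinAt.mul (hder t ht)
  have hanti : AntitoneOn (fun s => Real.exp (-(2 * B) * s) * N s) (Set.Icc 0 L) := by
    refine antitoneOn_of_hasDerivWithinAt_nonpos (convex_Icc 0 L)
      (fun t ht => (hderE t ht).continuousWithinAt)
      (fun t ht => (hderE t (interior_subset ht)).mono interior_subset) fun t _ => ?_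
    nlinarith [mul_le_mul_of_nonneg_left (hle t) (Real.exp_pos (-(2 * B) * t)).le]
  have hN0 : N 0 = 0 := by simp [hN, hn, h0]
  intro t ht i
  have h := hanti (Set.left_mem_Icc.2 hL) ht ht.1
  simp only [hN0, mul_zero] at h
  have hNt : N t ≤ 0 := by
    by_contra! hpos
    exact absurd h (not_le.2 (mul_pos (Real.exp_pos _) hpos))
  have hi : (n t i) ^ 2 ≤ N t :=
    Finset.single_le_sum (f := fun i => (n t i) ^ 2) (fun i _ => sq_nonneg _) (Finset.mem_univ i)
  have : n t i = 0 := pow_eq_zero_iff two_ne_zero |>.1 (le_antisymm (hi.trans hNt) (sq_nonneg _))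
  exact min_eq_right_iff.1 this

/-- The overdetermined eigenvalue problem on the imaginary axis has only the trivial
solution: if `ω ∈ ℝ`, `w` is `C⁴` and `z` is `C²` on `[0,L]` with
`c·z − z'' = w'` and `Ã·w'''' + K·(c·z' − w'') = m·ω²·w` on `[0,L]`, with boundary
conditions `w(0) = w'(0) = w'(L) = w''(L) = w'''(L) = 0`, `z(0) = z(L) = z'(L) = 0`,
then `w ≡ 0` on `[0,L]`. -/
theorem overdetermined_trivial (L m A K c : ℝ)
    (hL : 0 < L) (hm : 0 < m) (hA : 0 < A) (hK : 0 < K) (hc : 0 < c)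
    (ω : ℝ)
    (w w' w'' w''' w'''' : ℝ → ℝ)
    (hw' : ∀ x ∈ Set.Icc 0 L, HasDerivWithinAt w (w' x) (Set.Icc 0 L) x)
    (hw'' : ∀ x ∈ Set.Icc 0 L, HasDerivWithinAt w' (w'' x) (Set.Icc 0 L) x)
    (hw''' : ∀ x ∈ Set.Icc 0 L, HasDerivWithinAt w'' (w''' x) (Set.Icc 0 L) x)
    (hw'''' : ∀ x ∈ Set.Icc 0 L, HasDerivWithinAt w''' (w'''' x) (Set.Icc 0 L) x)
    (hw''''c : ContinuousOn w'''' (Set.Icc 0 L))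
    (z z' z'' : ℝ → ℝ)
    (hz' : ∀ x ∈ Set.Icc 0 L, HasDerivWithinAt z (z' x) (Set.Icc 0 L) x)
    (hz'' : ∀ x ∈ Set.Icc 0 L, HasDerivWithinAt z' (z'' x) (Set.Icc 0 L) x)
    (hz''c : ContinuousOn z'' (Set.Icc 0 L))
    (heq1 : ∀ x ∈ Set.Icc 0 L, c * z x - z'' x = w' x)
    (heq2 : ∀ x ∈ Set.Icc 0 L,
      A * w'''' x + K * (c * z' x - w'' x) = m * ω ^ 2 * w x)
    (hbc1 : w 0 = 0) (hbc2 : w' 0 = 0) (hbc3 : w' L = 0)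
    (hbc4 : w'' L = 0) (hbc5 : w''' L = 0)
    (hbc6 : z 0 = 0) (hbc7 : z L = 0) (hbc8 : z' L = 0) :
    ∀ x ∈ Set.Icc 0 L, w x = 0 := by
  -- The sign `σ` makes the initial state of the reversed system nonnegative.
  obtain ⟨σ, hσ, hσw⟩ : ∃ σ : ℝ, σ ≠ 0 ∧ 0 ≤ σ * w L := by
    rcases le_total 0 (w L) with h | h
    · exact ⟨1, one_ne_zero, by simpa using h⟩
    · exact ⟨-1, by norm_num, by simpa using h⟩
  have hrefl : ∀ t ∈ Set.Icc 0 L, L - t ∈ Set.Icc 0 L := fun t ht =>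
    ⟨sub_nonneg.2 ht.2, sub_le_self _ ht.1⟩
  have hrev : ∀ (τ : ℝ) (f f' : ℝ → ℝ),
      (∀ x ∈ Set.Icc 0 L, HasDerivWithinAt f (f' x) (Set.Icc 0 L) x) →
      ∀ t ∈ Set.Icc 0 L,
        HasDerivWithinAt (fun s => τ * f (L - s)) (τ * -f' (L - t)) (Set.Icc 0 L) t := by
    intro τ f f' hf t ht
    have h1 : HasDerivWithinAt (fun s => L - s) (-1) (Set.Icc 0 L) t :=
      ((hasDerivAt_id t).const_sub L).hasDerivWithinAt
    have h2 := ((hf _ (hrefl t ht)).comp t h1 hrefl).const_mul τ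
    simpa [Function.comp_def] using h2
  let X : ℝ → Fin 6 → ℝ := fun t =>
    ![σ * w (L - t), -σ * w' (L - t), σ * w'' (L - t), -σ * w''' (L - t),
      σ * z (L - t), -σ * z' (L - t)]
  let M : Fin 6 → Fin 6 → ℝ :=
    ![![0, 1, 0, 0, 0, 0],
      ![0, 0, 1, 0, 0, 0],
      ![0, 0, 0, 1, 0, 0],
      ![m * ω ^ 2 / A, 0, K / A, 0, 0, K * c / A],
      ![0, 0, 0, 0, 0, 1],
      ![0, 1, 0, 0, c, 0]]
  have hM : ∀ i j, 0 ≤ M i j := by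
    intro i j
    fin_cases i <;> fin_cases j <;> simp [M] <;> positivity
  have hX : ∀ i, ∀ t ∈ Set.Icc 0 L,
      HasDerivWithinAt (fun s => X s i) (∑ j, M i j * X t j) (Set.Icc 0 L) t := by
    intro i t ht
    have e1 := heq1 _ (hrefl t ht)
    have e2 := heq2 _ (hrefl t ht)
    fin_cases i
    · refine (hrev σ w w' hw' t ht).congr_deriv ?_
      simp [M, X, Fin.sum_univ_six]
    · refine (hrev (-σ) w' w'' hw'' t ht).congr_deriv ?_
      simp [M, X, Fin.sum_univ_six]
    · refine (hrev σ w'' w''' hw''' t ht).congr_deriv ?_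
      simp [M, X, Fin.sum_univ_six]
    · refine (hrev (-σ) w''' w'''' hw'''' t ht).congr_deriv ?_
      simp [M, X, Fin.sum_univ_six]
      field_simp
      linear_combination e2
    · refine (hrev σ z z' hz' t ht).congr_deriv ?_
      simp [M, X, Fin.sum_univ_six]
    · refine (hrev (-σ) z' z'' hz'' t ht).congr_deriv ?_
      simp [M, X, Fin.sum_univ_six]
      linear_combination -σ * e1
  have h0 : ∀ i, 0 ≤ X 0 i := by
    intro i
    fin_cases i <;> simp [X, hbc3, hbc4, hbc5, hbc7, hbc8, hσw]
  have hpos := nonneg_of_nonneg_system hL.le M hM X hX h0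
  have hw_nonneg : ∀ x ∈ Set.Icc 0 L, 0 ≤ σ * w x := fun x hx => by
    simpa [X] using hpos _ (hrefl x hx) 0
  have hw'_nonpos : ∀ x ∈ Set.Icc 0 L, σ * w' x ≤ 0 := fun x hx => by
    simpa [X] using hpos _ (hrefl x hx) 1
  have hanti : AntitoneOn (fun x => σ * w x) (Set.Icc 0 L) :=
    antitoneOn_of_hasDerivWithinAt_nonpos (convex_Icc 0 L)
      (fun x hx => ((hw' x hx).const_mul σ).continuousWithinAt)
      (fun x hx => ((hw' x (interior_subset hx)).const_mul σ).mono interior_subset)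
      fun x hx => hw'_nonpos x (interior_subset hx)
  intro x hx
  have hle : σ * w x ≤ 0 := by
    simpa [hbc1] using hanti (Set.left_mem_Icc.2 hL.le) hx hx.1
  exact (mul_eq_zero.1 (le_antisymm hle (hw_nonneg x hx))).resolve_left hσ
end

section
/- Multiplier identity II: if w : [0,L] → ℝ is three times continuously differentiable with w(0) = 0, w'(L) = 0, and w''(L) = 0, then ∫₀^L x·w(x)·w'''(x) dx = (3/2)·∫₀^L (w'(x))² dx. -/
/-!
The function `F x = x w w'' - (1/2) x w'^2 - w w'` satisfies `F' = x w w''' - (3/2) w'^2`, and the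
boundary conditions make `F` vanish at both endpoints, so the identity is the fundamental theorem
of calculus applied to `F`.
-/

/-- Multiplier identity II: if `w` is three times continuously differentiable on `[0,L]`
with `w(0) = 0`, `w'(L) = 0`, `w''(L) = 0`, then
`∫₀^L x·w(x)·w'''(x) dx = (3/2)·∫₀^L (w'(x))² dx`. -/
theorem multiplier_II (L : ℝ) (hL : 0 < L)
    (w w' w'' w''' : ℝ → ℝ)
    (hw' : ∀ x ∈ Set.Icc 0 L, HasDerivWithinAt w (w' x) (Set.Icc 0 L) x)
    (hw'' : ∀ x ∈ Set.Icc 0 L, HasDerivWithinAt w' (w'' x) (Set.Icc 0 L) x)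
    (hw''' : ∀ x ∈ Set.Icc 0 L, HasDerivWithinAt w'' (w''' x) (Set.Icc 0 L) x)
    (hw'''c : ContinuousOn w''' (Set.Icc 0 L))
    (hbc0 : w 0 = 0) (hbcL1 : w' L = 0) (hbcL2 : w'' L = 0) :
    ∫ x in (0:ℝ)..L, x * w x * w''' x = (3 / 2) * ∫ x in (0:ℝ)..L, (w' x) ^ 2 := by
  have cw : ContinuousOn w (Set.Icc 0 L) := fun x hx => (hw' x hx).continuousWithinAt
  have cw' : ContinuousOn w' (Set.Icc 0 L) := fun x hx => (hw'' x hx).continuousWithinAt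
  have cw'' : ContinuousOn w'' (Set.Icc 0 L) := fun x hx => (hw''' x hx).continuousWithinAt
  have i1 : IntervalIntegrable (fun x => x * w x * w''' x) MeasureTheory.volume 0 L :=
    ContinuousOn.intervalIntegrable_of_Icc hL.le ((continuousOn_id.mul cw).mul hw'''c)
  have i2 : IntervalIntegrable (fun x => (3 / 2) * (w' x) ^ 2) MeasureTheory.volume 0 L :=
    ContinuousOn.intervalIntegrable_of_Icc hL.le (continuousOn_const.mul (cw'.pow 2))
  have key : ∫ x in (0:ℝ)..L, (x * w x * w''' x - (3 / 2) * (w' x) ^ 2) =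
      (L * w L * w'' L - (1 / 2) * (L * (w' L * w' L)) - w L * w' L) -
        (0 * w 0 * w'' 0 - (1 / 2) * (0 * (w' 0 * w' 0)) - w 0 * w' 0) := by
    refine intervalIntegral.integral_eq_sub_of_hasDerivAt_of_le
      (f := fun x => x * w x * w'' x - (1 / 2) * (x * (w' x * w' x)) - w x * w' x) hL.le
      ?_ ?_ (i1.sub i2)
    · exact (((continuousOn_id.mul cw).mul cw'').sub
        (continuousOn_const.mul (continuousOn_id.mul (cw'.mul cw')))).sub (cw.mul cw')
    · intro x hx
      have hm := Set.Ioo_subset_Icc_self hx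
      have hn := Icc_mem_nhds hx.1 hx.2
      have d0 := (hw' x hm).hasDerivAt hn
      have d1 := (hw'' x hm).hasDerivAt hn
      have d2 := (hw''' x hm).hasDerivAt hn
      have hid := hasDerivAt_id' x
      refine ((((hid.mul d0).mul d2).sub
        ((hid.mul (d1.mul d1)).const_mul (1 / 2))).sub (d0.mul d1)).congr_deriv ?_
      simp only [Pi.mul_apply]
      ring
  rw [intervalIntegral.integral_sub i1 i2, intervalIntegral.integral_const_mul,
    hbc0, hbcL1, hbcL2] at key
  linarith
end

section
/- Multiplier identity IV: let c > 0 and let z : [0,L] → ℝ be four times continuously differentiable with z'(L) = 0, z''(0) = 0, and z''(L) = 0. Then c·∫₀^L x·z'(x)·(c·z''(x) − z''''(x)) dx = −(c²/2)·∫₀^L (z'(x))² dx − (3c/2)·∫₀^L (z''(x))² dx; in particular this quantity is nonpositive. -/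
/-!
Multiplying by `x z'` makes everything an exact derivative. With
`F x = (c/2) x z'² - x z' z''' + z' z'' + x z''²/2`, one has
`F' = x z' (c z'' - z'''') + (c/2) z'² + (3/2) z''²`,
and the boundary conditions force `F 0 = F L = 0`. Integrating `F'` over `[0, L]` gives the
identity, and the sign follows because both remaining integrands are squares.
-/

/-- Multiplier identity IV: if `c > 0` and `z` is four times continuously differentiable
on `[0,L]` with `z'(L) = 0`, `z''(0) = 0`, `z''(L) = 0`, then
`c·∫₀^L x·z'(x)·(c·z''(x) − z''''(x)) dx = −(c²/2)·∫₀^L (z'(x))² dx − (3c/2)·∫₀^L (z''(x))² dx`;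
in particular this quantity is nonpositive. -/
theorem multiplier_IV (L c : ℝ) (hL : 0 < L) (hc : 0 < c)
    (z z' z'' z''' z'''' : ℝ → ℝ)
    (hz' : ∀ x ∈ Set.Icc 0 L, HasDerivWithinAt z (z' x) (Set.Icc 0 L) x)
    (hz'' : ∀ x ∈ Set.Icc 0 L, HasDerivWithinAt z' (z'' x) (Set.Icc 0 L) x)
    (hz''' : ∀ x ∈ Set.Icc 0 L, HasDerivWithinAt z'' (z''' x) (Set.Icc 0 L) x)
    (hz'''' : ∀ x ∈ Set.Icc 0 L, HasDerivWithinAt z''' (z'''' x) (Set.Icc 0 L) x)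
    (hz''''c : ContinuousOn z'''' (Set.Icc 0 L))
    (hbcL1 : z' L = 0) (hbc0 : z'' 0 = 0) (hbcL2 : z'' L = 0) :
    (c * ∫ x in (0:ℝ)..L, x * z' x * (c * z'' x - z'''' x)) =
        -(c ^ 2 / 2) * (∫ x in (0:ℝ)..L, (z' x) ^ 2) -
          (3 * c / 2) * ∫ x in (0:ℝ)..L, (z'' x) ^ 2 ∧
      (c * ∫ x in (0:ℝ)..L, x * z' x * (c * z'' x - z'''' x)) ≤ 0 := by
  have c1 : ContinuousOn z' (Set.Icc 0 L) := fun x hx => (hz'' x hx).continuousWithinAt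
  have c2 : ContinuousOn z'' (Set.Icc 0 L) := fun x hx => (hz''' x hx).continuousWithinAt
  have cI : ContinuousOn (fun x => x * z' x * (c * z'' x - z'''' x)) (Set.Icc 0 L) := by
    fun_prop
  have cA : ContinuousOn (fun x => (z' x) ^ 2) (Set.Icc 0 L) := by fun_prop
  have cB : ContinuousOn (fun x => (z'' x) ^ 2) (Set.Icc 0 L) := by fun_prop
  have iI := cI.intervalIntegrable_of_Icc (μ := MeasureTheory.volume) hL.le
  have iA := cA.intervalIntegrable_of_Icc (μ := MeasureTheory.volume) hL.le
  have iB := cB.intervalIntegrable_of_Icc (μ := MeasureTheory.volume) hL.le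
  have hF : ∀ x ∈ Set.Icc 0 L, HasDerivWithinAt
      (fun x => c / 2 * (x * z' x ^ 2) - x * z' x * z''' x + z' x * z'' x + x * z'' x ^ 2 / 2)
      (x * z' x * (c * z'' x - z'''' x) + c / 2 * z' x ^ 2 + 3 / 2 * z'' x ^ 2)
      (Set.Icc 0 L) x := by
    intro x hx
    have h0 := hasDerivWithinAt_id x (Set.Icc 0 L)
    have h1 := hz'' x hx
    have h2 := hz''' x hx
    have h3 := hz'''' x hx
    convert! ((((h0.mul (h1.pow 2)).const_mul (c / 2)).sub ((h0.mul h1).mul h3)).add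
      (h1.mul h2)).add ((h0.mul (h2.pow 2)).div_const 2) using 1
    simp
    ring
  have key := intervalIntegral.integral_eq_sub_of_hasDerivAt_of_le hL.le
    (fun x hx => (hF x hx).continuousWithinAt)
    (fun x hx => (hF x (Set.Ioo_subset_Icc_self hx)).hasDerivAt (Icc_mem_nhds hx.1 hx.2))
    ((iI.add (iA.const_mul (c / 2))).add (iB.const_mul (3 / 2)))
  rw [intervalIntegral.integral_add (iI.add (iA.const_mul (c / 2))) (iB.const_mul (3 / 2)),
    intervalIntegral.integral_add iI (iA.const_mul (c / 2)),
    intervalIntegral.integral_const_mul, intervalIntegral.integral_const_mul] at key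
  simp only [hbcL1, hbc0, hbcL2] at key
  have hA : 0 ≤ ∫ x in (0:ℝ)..L, (z' x) ^ 2 :=
    intervalIntegral.integral_nonneg hL.le fun x _ => sq_nonneg _
  have hB : 0 ≤ ∫ x in (0:ℝ)..L, (z'' x) ^ 2 :=
    intervalIntegral.integral_nonneg hL.le fun x _ => sq_nonneg _
  have main : (c * ∫ x in (0:ℝ)..L, x * z' x * (c * z'' x - z'''' x)) =
      -(c ^ 2 / 2) * (∫ x in (0:ℝ)..L, (z' x) ^ 2) -
        (3 * c / 2) * ∫ x in (0:ℝ)..L, (z'' x) ^ 2 := by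
    linear_combination c * key
  refine ⟨main, ?_⟩
  rw [main]
  have hA' := mul_nonneg (sq_nonneg c) hA
  have hB' := mul_nonneg hc.le hB
  linarith
end

section
/- Representation of the feedback observation through the shear variable: let w : [0,L] → ℝ be three times continuously differentiable with w'(0) = 0 and w''(L) = 0, and let φ : [0,L] → ℝ be twice continuously differentiable with φ(0) = 0 and φ'(L) = 0, satisfying c·φ(x) − φ''(x) + B̃·w'''(x) = 0 for all x ∈ [0,L]. Then for every x ∈ [0,L], (P_ς w')(x) = (1/(c·B̃))·(B̃·w'(x) − φ(x)); in particular (P_ς w')(L) = (1/(c·B̃))·(B̃·w'(L) − φ(L)). -/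
/-- Green's identity for `c - D²` on a subinterval: if `h'' = c h`, then `h' u - h u'` is an
antiderivative of `h (c u - u'')`. -/
lemma integral_mul_eq_of_green {L c a b : ℝ} (ha : 0 ≤ a) (hab : a ≤ b) (hb : b ≤ L)
    {u u' u'' f h h' : ℝ → ℝ}
    (hu : ∀ x ∈ Set.Icc 0 L, HasDerivWithinAt u (u' x) (Set.Icc 0 L) x)
    (hu' : ∀ x ∈ Set.Icc 0 L, HasDerivWithinAt u' (u'' x) (Set.Icc 0 L) x)
    (hf : ContinuousOn f (Set.Icc 0 L))
    (heq : ∀ x ∈ Set.Icc 0 L, c * u x - u'' x = f x)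
    (hh : ∀ x, HasDerivAt h (h' x) x) (hh' : ∀ x, HasDerivAt h' (c * h x) x) :
    ∫ z in a..b, h z * f z = (h' b * u b - h b * u' b) - (h' a * u a - h a * u' a) := by
  have hsub : Set.Icc a b ⊆ Set.Icc 0 L := Set.Icc_subset_Icc ha hb
  have hhc : Continuous h := continuous_iff_continuousAt.2 fun x => (hh x).continuousAt
  have hhc' : Continuous h' := continuous_iff_continuousAt.2 fun x => (hh' x).continuousAt
  have huc : ContinuousOn u (Set.Icc a b) :=
    fun x hx => ((hu x (hsub hx)).continuousWithinAt).mono hsub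
  have huc' : ContinuousOn u' (Set.Icc a b) :=
    fun x hx => ((hu' x (hsub hx)).continuousWithinAt).mono hsub
  refine intervalIntegral.integral_eq_sub_of_hasDerivAt_of_le
    (f := fun z => h' z * u z - h z * u' z) hab
    ((hhc'.continuousOn.mul huc).sub (hhc.continuousOn.mul huc')) (fun x hx => ?_) ?_
  · have hxL : x ∈ Set.Icc 0 L := hsub (Set.Ioo_subset_Icc_self hx)
    have hn : Set.Icc 0 L ∈ nhds x :=
      Icc_mem_nhds (lt_of_le_of_lt ha hx.1) (lt_of_lt_of_le hx.2 hb)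
    have key := ((hh' x).mul ((hu x hxL).hasDerivAt hn)).sub
      ((hh x).mul ((hu' x hxL).hasDerivAt hn))
    refine key.congr_deriv ?_
    rw [← heq x hxL]
    ring
  · apply ContinuousOn.intervalIntegrable
    rw [Set.uIcc_of_le hab]
    exact hhc.continuousOn.mul (hf.mono hsub)

/-- `gker L c` is the Green's kernel of `c - D²` with `u 0 = 0` and `u' L = 0`. -/
lemma integral_gker_mul_s16 {L c : ℝ} (hc : 0 < c)
    {u u' u'' f : ℝ → ℝ}
    (hu : ∀ x ∈ Set.Icc 0 L, HasDerivWithinAt u (u' x) (Set.Icc 0 L) x)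
    (hu' : ∀ x ∈ Set.Icc 0 L, HasDerivWithinAt u' (u'' x) (Set.Icc 0 L) x)
    (hf : ContinuousOn f (Set.Icc 0 L))
    (heq : ∀ x ∈ Set.Icc 0 L, c * u x - u'' x = f x)
    (hu0 : u 0 = 0) (huL : u' L = 0) {x : ℝ} (hx : x ∈ Set.Icc 0 L) :
    ∫ z in (0:ℝ)..L, gker L c x z * f z = u x := by
  obtain ⟨hx0, hxL⟩ := hx
  set s := Real.sqrt c with hs
  have hs0 : 0 < s := Real.sqrt_pos.2 hc
  have hss : s * s = c := Real.mul_self_sqrt hc.le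
  have hC : 0 < Real.cosh (s * L) := Real.cosh_pos _
  have hlin : ∀ d z : ℝ, HasDerivAt (fun z => s * (z - d)) s z := fun d z => by
    simpa using ((hasDerivAt_id z).sub_const d).const_mul s
  have hI1 := integral_mul_eq_of_green (h := fun z => Real.sinh (s * (z - 0)))
    (h' := fun z => s * Real.cosh (s * (z - 0))) le_rfl hx0 hxL hu hu' hf heq
    (fun z => (hlin 0 z).sinh.congr_deriv (by ring))
    (fun z => ((hlin 0 z).cosh.const_mul s).congr_deriv (by rw [← hss]; ring))
  have hI2 := integral_mul_eq_of_green (h := fun z => Real.cosh (s * (z - L)))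
    (h' := fun z => s * Real.sinh (s * (z - L))) hx0 hxL le_rfl hu hu' hf heq
    (fun z => (hlin L z).cosh.congr_deriv (by ring))
    (fun z => ((hlin L z).sinh.const_mul s).congr_deriv (by rw [← hss]; ring))
  simp only [sub_zero, sub_self, mul_zero, Real.sinh_zero, Real.cosh_zero, hu0, huL, zero_mul]
    at hI1 hI2
  -- On each side of the diagonal the kernel is a constant multiple of one of the two solutions;
  -- the two branches of `gker` agree at `z = x`.
  have hE1 : Set.EqOn (fun z => gker L c x z * f z)
      (fun z => Real.cosh (s * (x - L)) / (s * Real.cosh (s * L)) * (Real.sinh (s * z) * f z))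
      (Set.uIcc 0 x) := by
    intro z hz
    rw [Set.uIcc_of_le hx0] at hz
    simp only [gker, ← hs]
    split_ifs with h
    · obtain rfl : x = z := le_antisymm h hz.2
      ring
    · ring
  have hE2 : Set.EqOn (fun z => gker L c x z * f z)
      (fun z => Real.sinh (s * x) / (s * Real.cosh (s * L)) * (Real.cosh (s * (z - L)) * f z))
      (Set.uIcc x L) := by
    intro z hz
    rw [Set.uIcc_of_le hxL] at hz
    simp only [gker, ← hs, if_pos hz.1]
    ring
  have hf1 : ContinuousOn f (Set.uIcc 0 x) := by
    rw [Set.uIcc_of_le hx0]; exact hf.mono (Set.Icc_subset_Icc le_rfl hxL)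
  have hf2 : ContinuousOn f (Set.uIcc x L) := by
    rw [Set.uIcc_of_le hxL]; exact hf.mono (Set.Icc_subset_Icc hx0 le_rfl)
  have hi1 : IntervalIntegrable (fun z => gker L c x z * f z) MeasureTheory.volume 0 x := by
    refine (ContinuousOn.congr ?_ hE1).intervalIntegrable
    fun_prop
  have hi2 : IntervalIntegrable (fun z => gker L c x z * f z) MeasureTheory.volume x L := by
    refine (ContinuousOn.congr ?_ hE2).intervalIntegrable
    fun_prop
  rw [← intervalIntegral.integral_add_adjacent_intervals hi1 hi2,
    intervalIntegral.integral_congr hE1, intervalIntegral.integral_congr hE2,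
    intervalIntegral.integral_const_mul, intervalIntegral.integral_const_mul, hI1, hI2]
  have hadd : Real.cosh (s * L) = Real.cosh (s * x) * Real.cosh (s * (x - L))
      - Real.sinh (s * x) * Real.sinh (s * (x - L)) := by
    rw [← Real.cosh_sub]; congr 1; ring
  field_simp
  rw [hadd]
  ring

/-- Representation of the feedback observation through the shear variable:
if `w` is `C³` with `w'(0) = 0`, `w''(L) = 0`, and `φ` is `C²` with `φ(0) = 0`,
`φ'(L) = 0`, satisfying `c·φ − φ'' + B̃·w''' = 0` on `[0,L]`, then
`(P_ς w')(x) = (1/(c·B̃))·(B̃·w'(x) − φ(x))` for all `x ∈ [0,L]`; in particular at `x = L`. -/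
theorem feedback_representation (L c B : ℝ) (hL : 0 < L) (hc : 0 < c) (hB : 0 < B)
    (w w' w'' w''' : ℝ → ℝ)
    (hw' : ∀ x ∈ Set.Icc 0 L, HasDerivWithinAt w (w' x) (Set.Icc 0 L) x)
    (hw'' : ∀ x ∈ Set.Icc 0 L, HasDerivWithinAt w' (w'' x) (Set.Icc 0 L) x)
    (hw''' : ∀ x ∈ Set.Icc 0 L, HasDerivWithinAt w'' (w''' x) (Set.Icc 0 L) x)
    (hw'''c : ContinuousOn w''' (Set.Icc 0 L))
    (hwbc0 : w' 0 = 0) (hwbcL : w'' L = 0)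
    (φ φ' φ'' : ℝ → ℝ)
    (hφ' : ∀ x ∈ Set.Icc 0 L, HasDerivWithinAt φ (φ' x) (Set.Icc 0 L) x)
    (hφ'' : ∀ x ∈ Set.Icc 0 L, HasDerivWithinAt φ' (φ'' x) (Set.Icc 0 L) x)
    (hφ''c : ContinuousOn φ'' (Set.Icc 0 L))
    (hφbc0 : φ 0 = 0) (hφbcL : φ' L = 0)
    (heq : ∀ x ∈ Set.Icc 0 L, c * φ x - φ'' x + B * w''' x = 0) :
    (∀ x ∈ Set.Icc 0 L,
        (∫ z in (0:ℝ)..L, gker L c x z * w' z) = (1 / (c * B)) * (B * w' x - φ x)) ∧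
      (∫ z in (0:ℝ)..L, gker L c L z * w' z) = (1 / (c * B)) * (B * w' L - φ L) := by
 
  have main : ∀ x ∈ Set.Icc 0 L,
      (∫ z in (0:ℝ)..L, gker L c x z * w' z) = (1 / (c * B)) * (B * w' x - φ x) := by
    intro x hx
    refine integral_gker_mul_s16 (u := fun x => (1 / (c * B)) * (B * w' x - φ x))
      (u' := fun x => (1 / (c * B)) * (B * w'' x - φ' x))
      (u'' := fun x => (1 / (c * B)) * (B * w''' x - φ'' x)) hc
      (fun y hy => (((hw'' y hy).const_mul B).sub (hφ' y hy)).const_mul _)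
      (fun y hy => (((hw''' y hy).const_mul B).sub (hφ'' y hy)).const_mul _)
      (fun y hy => (hw'' y hy).continuousWithinAt) (fun y hy => ?_) ?_ ?_ hx
    · have := heq y hy
      field_simp
      linarith
    · simp [hwbc0, hφbc0]
    · simp [hwbcL, hφbcL]
  exact ⟨main, main L ⟨hL.le, le_rfl⟩⟩
end
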